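/- For every real β > 1 and every complex number s with Re(s) > 2, the series ∑_{n=1}^∞ S_β(n) n^{-s} and ∑_{k ∈ ℤ} c_β(k) ζ(s - 1 - 2πik/log β) both converge absolutely, and ∑_{n=1}^∞ S_β(n) n^{-s} = -((β-1)/(2 log β)) ζ'(s-1) + ∑_{k ∈ ℤ} c_β(k) ζ(s - 1 - 2πik/log β), where ζ' is the derivative of the Riemann zeta function. -/

import Mathlib

noncomputable section

/-- The Fourier coefficients `c_β(k)` from Delange's theorem. -/
def delangeCoeff (β : ℝ) (k : ℤ) : ℂ :=
  if k = 0 then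
    ((((β : ℂ) - 1) / (2 * Real.log β)) * (Real.log (2 * Real.pi) - 1) - ((β : ℂ) + 1) / 4)
  else
    -(((β : ℂ) - 1) / (2 * Real.pi * Complex.I * k)) *
      (1 + 2 * Real.pi * Complex.I * k / Real.log β)⁻¹ *
      riemannZeta (2 * Real.pi * Complex.I * k / Real.log β)

/-- The periodic function `h_β` from Delange's theorem. -/
def delangeH (β : ℝ) (x : ℝ) : ℂ :=
  ∑' k : ℤ, delangeCoeff β k * Complex.exp (2 * Real.pi * Complex.I * k * x)

/-- The interpolated cumulative sum-of-digits function `S_β(n)`. -/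
def cumDigitSumInterp (β : ℝ) (n : ℕ) : ℂ :=
  (((β : ℂ) - 1) / (2 * Real.log β)) * n * Real.log n +
    delangeH β (Real.log n / Real.log β) * n

/-!
Since `n ^ (2πik / log β) = exp (2πik log n / log β)`, the term
`h_β(log n / log β) * n ^ (1 - s)` is `∑ c_β(k) * n ^ -(s - 1 - 2πik / log β)`, and summing over `n`
first gives `∑ c_β(k) * ζ(s - 1 - 2πik / log β)`. The interchange is Fubini's theorem, because
`|n ^ -(s - 1 - 2πik / log β)| = n ^ -(Re s - 1)` does not depend on `k`, as soon as `∑ |c_β(k)|`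
converges.

As `c_β(k) = O(k⁻² |ζ(2πik / log β)|)`, it is enough that `ζ(it) = O(|t| ^ (1 / 2 + θ))` for some
`θ < 1 / 2`. For `Re s > 1`, `ζ(s) - 1 / (s - 1)` is the sum over `n` of the difference between
`n ^ -s` and `∫ x ^ -s` over `[n, n + 1]`. This difference is `O(n ^ -Re s)` trivially and
`O(|s| n ^ -(Re s + 1))` by the mean value inequality, hence `O(|s| ^ θ n ^ -(Re s + θ))` by
interpolation. So `ζ(s) - 1 / (s - 1) = O(|s| ^ θ)`, which extends to `Re s = 1` by continuity.
Finally `|ζ(it)|² = t tanh(πt / 2) / (2π) * |ζ(1 + it)|²` by the functional equation.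
-/

open Filter Asymptotics MeasureTheory Set
open Complex (I)
open scoped Real Topology ComplexConjugate

section PowerDifferences

variable {s : ℂ} {m x θ : ℝ}

lemma le_rpow_mul_rpow_of_le_of_le {a b d : ℝ} (hd : 0 ≤ d) (ha : d ≤ a) (hb : d ≤ b)
    (hθ₀ : 0 ≤ θ) (hθ₁ : θ ≤ 1) : d ≤ a ^ (1 - θ) * b ^ θ :=
  calc d = d ^ (1 - θ) * d ^ θ := by
        rw [← Real.rpow_add_of_nonneg hd (sub_nonneg.2 hθ₁) hθ₀, sub_add_cancel, Real.rpow_one]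
    _ ≤ a ^ (1 - θ) * b ^ θ := by
        gcongr
        exact Real.rpow_nonneg (hd.trans ha) _

lemma norm_cpow_neg_le_rpow (hs : 0 ≤ s.re) (hm : 0 < m) (hmx : m ≤ x) :
    ‖(x : ℂ) ^ (-s)‖ ≤ m ^ (-s.re) := by
  rw [Complex.norm_cpow_eq_rpow_re_of_pos (hm.trans_le hmx), Complex.neg_re]
  exact Real.rpow_le_rpow_of_nonpos hm hmx (neg_nonpos.2 hs)

lemma norm_cpow_neg_sub_cpow_neg_le_two_mul (hs : 0 ≤ s.re) (hm : 0 < m) (hmx : m ≤ x) :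
    ‖(m : ℂ) ^ (-s) - (x : ℂ) ^ (-s)‖ ≤ 2 * m ^ (-s.re) :=
  calc ‖(m : ℂ) ^ (-s) - (x : ℂ) ^ (-s)‖ ≤ ‖(m : ℂ) ^ (-s)‖ + ‖(x : ℂ) ^ (-s)‖ := norm_sub_le _ _
    _ ≤ m ^ (-s.re) + m ^ (-s.re) :=
        add_le_add (norm_cpow_neg_le_rpow hs hm le_rfl) (norm_cpow_neg_le_rpow hs hm hmx)
    _ = 2 * m ^ (-s.re) := (two_mul _).symm

lemma norm_cpow_neg_sub_cpow_neg_le_mul_sub (hs : 0 ≤ s.re) (hm : 0 < m) (hmx : m ≤ x) :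
    ‖(m : ℂ) ^ (-s) - (x : ℂ) ^ (-s)‖ ≤ ‖s‖ * m ^ (-(s.re + 1)) * (x - m) := by
  rcases eq_or_ne s 0 with rfl | hs₀
  · simp
  have hderiv (y : ℝ) (hy : y ∈ Icc m x) :
      HasDerivWithinAt (fun y : ℝ ↦ (y : ℂ) ^ (-s)) (-s * (y : ℂ) ^ (-s - 1)) (Icc m x) y :=
    (hasDerivAt_ofReal_cpow_const (hm.trans_le hy.1).ne' (neg_ne_zero.2 hs₀)).hasDerivWithinAt
  have hbound (y : ℝ) (hy : y ∈ Icc m x) :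
      ‖-s * (y : ℂ) ^ (-s - 1)‖ ≤ ‖s‖ * m ^ (-(s.re + 1)) := by
    have h := norm_cpow_neg_le_rpow (s := s + 1) (by simpa using by linarith) hm hy.1
    rw [norm_mul, norm_neg, ← neg_add']
    gcongr
    simpa using h
  have h := (convex_Icc m x).norm_image_sub_le_of_norm_hasDerivWithin_le hderiv hbound
    (left_mem_Icc.2 hmx) (right_mem_Icc.2 hmx)
  rwa [norm_sub_rev, Real.norm_of_nonneg (sub_nonneg.2 hmx)] at h

lemma norm_cpow_neg_sub_cpow_neg_le (hs : 0 ≤ s.re) (hθ₀ : 0 ≤ θ) (hθ₁ : θ ≤ 1) (hm : 0 < m)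
    (hmx : m ≤ x) (hxm : x ≤ m + 1) :
    ‖(m : ℂ) ^ (-s) - (x : ℂ) ^ (-s)‖ ≤ 2 * ‖s‖ ^ θ * m ^ (-(s.re + θ)) := by
  have hlip : ‖(m : ℂ) ^ (-s) - (x : ℂ) ^ (-s)‖ ≤ ‖s‖ * m ^ (-(s.re + 1)) :=
    (norm_cpow_neg_sub_cpow_neg_le_mul_sub hs hm hmx).trans
      (mul_le_of_le_one_right (by positivity) (by linarith))
  have hexp : m ^ (-s.re * (1 - θ)) * m ^ (-(s.re + 1) * θ) = m ^ (-(s.re + θ)) := by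
    rw [← Real.rpow_add hm]
    ring_nf
  have htwo : (2 : ℝ) ^ (1 - θ) ≤ 2 :=
    Real.rpow_le_self_of_one_le one_le_two (sub_le_self 1 hθ₀)
  calc ‖(m : ℂ) ^ (-s) - (x : ℂ) ^ (-s)‖
      ≤ (2 * m ^ (-s.re)) ^ (1 - θ) * (‖s‖ * m ^ (-(s.re + 1))) ^ θ :=
        le_rpow_mul_rpow_of_le_of_le (norm_nonneg _)
          (norm_cpow_neg_sub_cpow_neg_le_two_mul hs hm hmx) hlip hθ₀ hθ₁
    _ = 2 ^ (1 - θ) * ‖s‖ ^ θ * (m ^ (-s.re * (1 - θ)) * m ^ (-(s.re + 1) * θ)) := by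
        rw [Real.mul_rpow two_pos.le (by positivity), Real.mul_rpow (norm_nonneg s) (by positivity),
          ← Real.rpow_mul hm.le, ← Real.rpow_mul hm.le]
        ring
    _ ≤ 2 * ‖s‖ ^ θ * m ^ (-(s.re + θ)) := by
        rw [hexp]
        gcongr

lemma norm_cpow_neg_sub_integral_le (hs : 0 ≤ s.re) (hθ₀ : 0 ≤ θ) (hθ₁ : θ ≤ 1) (hm : 0 < m) :
    ‖(m : ℂ) ^ (-s) - ∫ x in m..m + 1, (x : ℂ) ^ (-s)‖ ≤ 2 * ‖s‖ ^ θ * m ^ (-(s.re + θ)) := by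
  have hle : m ≤ m + 1 := le_add_of_nonneg_right zero_le_one
  have hint : IntervalIntegrable (fun x : ℝ ↦ (x : ℂ) ^ (-s)) volume m (m + 1) :=
    intervalIntegral.intervalIntegrable_cpow
      (.inr fun h ↦ hm.not_ge (by simpa [uIcc_of_le hle] using h.1))
  have hconst : ∫ _ in m..m + 1, (m : ℂ) ^ (-s) = (m : ℂ) ^ (-s) := by simp
  have h := intervalIntegral.norm_integral_le_of_norm_le_const (a := m) (b := m + 1)
    (f := fun x : ℝ ↦ (m : ℂ) ^ (-s) - (x : ℂ) ^ (-s)) fun x hx ↦ by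
      rw [uIoc_of_le hle] at hx
      exact norm_cpow_neg_sub_cpow_neg_le hs hθ₀ hθ₁ hm hx.1.le hx.2
  rwa [intervalIntegral.integral_sub intervalIntegrable_const hint, hconst, add_sub_cancel_left,
    abs_one, mul_one] at h

end PowerDifferences

section DirichletSeries

lemma hasSum_mul_cpow_neg_of_lseriesHasSum {f : ℕ → ℂ} {s a : ℂ} (h : LSeriesHasSum f s a) :
    HasSum (fun n : ℕ ↦ f (n + 1) * ((n + 1 : ℕ) : ℂ) ^ (-s)) a := by
  have h' := (hasSum_nat_add_iff' 1).2 h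
  simpa [LSeries.term_of_ne_zero, Complex.cpow_neg, div_eq_mul_inv] using h'

lemma hasSum_cpow_neg {s : ℂ} (hs : 1 < s.re) :
    HasSum (fun n : ℕ ↦ ((n + 1 : ℕ) : ℂ) ^ (-s)) (riemannZeta s) := by
  simpa using hasSum_mul_cpow_neg_of_lseriesHasSum (LSeriesHasSum_one hs)

lemma hasSum_log_mul_cpow_neg {s : ℂ} (hs : 1 < s.re) :
    HasSum (fun n : ℕ ↦ (Real.log ((n + 1 : ℕ) : ℝ) : ℂ) * ((n + 1 : ℕ) : ℂ) ^ (-s))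
      (-deriv riemannZeta s) := by
  have habs : LSeries.abscissaOfAbsConv 1 < (s.re : EReal) := by
    rw [LSeries.abscissaOfAbsConv_one]
    exact_mod_cast hs
  have hζ : LSeries 1 =ᶠ[𝓝 s] riemannZeta := by
    filter_upwards [(isOpen_lt continuous_const Complex.continuous_re).mem_nhds hs] with z hz
    exact LSeries_one_eq_riemannZeta hz
  have hderiv : LSeries (LSeries.logMul 1) s = -deriv riemannZeta s := by
    rw [← hζ.deriv_eq, LSeries_deriv habs, neg_neg]
  have h := hasSum_mul_cpow_neg_of_lseriesHasSum
    (LSeriesSummable_logMul_of_lt_re habs).LSeriesHasSum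
  simpa only [hderiv, LSeries.logMul, Pi.one_apply, mul_one, ← Complex.natCast_log] using h

variable {ι : Type*} {c z : ι → ℂ} {σ : ℝ}

lemma summable_prod_mul_cpow_neg (hc : Summable fun k ↦ ‖c k‖) (hσ : 1 < σ)
    (hz : ∀ k, σ ≤ (z k).re) :
    Summable fun p : ℕ × ι ↦ c p.2 * ((p.1 + 1 : ℕ) : ℂ) ^ (-z p.2) := by
  have hpow : Summable fun n : ℕ ↦ ((n + 1 : ℕ) : ℝ) ^ (-σ) :=
    (summable_nat_add_iff 1).2 (Real.summable_nat_rpow.2 (neg_lt_neg hσ))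
  refine .of_norm_bounded (hpow.mul_of_nonneg hc (fun n ↦ by positivity) fun k ↦ norm_nonneg _) ?_
  rintro ⟨n, k⟩
  rw [norm_mul, Complex.norm_natCast_cpow_of_pos n.succ_pos, Complex.neg_re, mul_comm]
  gcongr
  · exact_mod_cast n.succ_pos
  · exact hz k

lemma hasSum_mul_riemannZeta_of_summable_norm (hc : Summable fun k ↦ ‖c k‖) (hσ : 1 < σ)
    (hz : ∀ k, σ ≤ (z k).re) :
    HasSum (fun k ↦ c k * riemannZeta (z k))
      (∑' p : ℕ × ι, c p.2 * ((p.1 + 1 : ℕ) : ℂ) ^ (-z p.2)) :=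
  ((Equiv.prodComm ι ℕ).hasSum_iff.2 (summable_prod_mul_cpow_neg hc hσ hz).hasSum).prod_fiberwise
    fun k ↦ (hasSum_cpow_neg (hσ.trans_le (hz k))).mul_left (c k)

lemma hasSum_tsum_mul_cpow_neg (hc : Summable fun k ↦ ‖c k‖) (hσ : 1 < σ)
    (hz : ∀ k, σ ≤ (z k).re) :
    HasSum (fun n : ℕ ↦ ∑' k, c k * ((n + 1 : ℕ) : ℂ) ^ (-z k))
      (∑' k, c k * riemannZeta (z k)) := by
  have hprod := summable_prod_mul_cpow_neg hc hσ hz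
  rw [(hasSum_mul_riemannZeta_of_summable_norm hc hσ hz).tsum_eq]
  exact hprod.hasSum.prod_fiberwise fun n ↦ (hprod.prod_factor n).hasSum

end DirichletSeries

section ZetaGrowth

lemma hasSum_integral_cpow_neg {s : ℂ} (hs : 1 < s.re) :
    HasSum (fun n : ℕ ↦ ∫ x in ((n + 1 : ℕ) : ℝ)..((n + 1 : ℕ) : ℝ) + 1, (x : ℂ) ^ (-s))
      (s - 1)⁻¹ := by
  have hmono : Monotone fun n : ℕ ↦ ((n + 1 : ℕ) : ℝ) :=
    Nat.mono_cast.comp (Order.succ_mono (α := ℕ))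
  have hunion : ⋃ n : ℕ, Ioc ((n + 1 : ℕ) : ℝ) ((Order.succ n + 1 : ℕ) : ℝ) = Ioi 1 := by
    refine (iUnion_Ioc_map_succ_eq_Ioi (fun n ↦ hmono bot_le) ?_).trans (by simp)
    exact not_bddAbove_of_tendsto_atTop
      (tendsto_natCast_atTop_atTop.comp (tendsto_add_atTop_nat 1))
  have hre : (-s).re < -1 := neg_lt_neg hs
  have h := hasSum_integral_iUnion (μ := volume) (f := fun x : ℝ ↦ (x : ℂ) ^ (-s))
    (fun n : ℕ ↦ measurableSet_Ioc) hmono.pairwise_disjoint_on_Ioc_succ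
    (hunion ▸ integrableOn_Ioi_cpow_of_lt hre one_pos)
  rw [hunion, integral_Ioi_cpow_of_lt hre one_pos, Complex.ofReal_one, Complex.one_cpow,
    neg_div, ← div_neg, neg_add', neg_neg, one_div] at h
  refine h.congr_fun fun n ↦ ?_
  rw [intervalIntegral.integral_of_le (by simp), Order.succ_eq_add_one, Nat.cast_succ (n + 1)]

variable {θ : ℝ}

lemma norm_riemannZeta₀_le_of_one_lt_re {s : ℂ} (hs : 1 < s.re) (hθ₀ : 0 < θ) (hθ₁ : θ ≤ 1) :
    ‖riemannZeta₀ s‖ ≤ 2 * ‖s‖ ^ θ * ∑' n : ℕ, ((n + 1 : ℕ) : ℝ) ^ (-(1 + θ)) := by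
  have hpow : Summable fun n : ℕ ↦ ((n + 1 : ℕ) : ℝ) ^ (-(1 + θ)) :=
    (summable_nat_add_iff 1).2 (Real.summable_nat_rpow.2 (by linarith))
  have hs₁ : s ≠ 1 := by
    rintro rfl
    simp at hs
  have hsum : HasSum (fun n : ℕ ↦ ((n + 1 : ℕ) : ℂ) ^ (-s) -
      ∫ x in ((n + 1 : ℕ) : ℝ)..((n + 1 : ℕ) : ℝ) + 1, (x : ℂ) ^ (-s)) (riemannZeta₀ s) := by
    rw [← sub_eq_of_eq_add' (riemannZeta_eq_inv_sub_add hs₁)]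
    exact (hasSum_cpow_neg hs).sub (hasSum_integral_cpow_neg hs)
  refine hsum.norm_le_of_bounded (hpow.hasSum.mul_left (2 * ‖s‖ ^ θ)) fun n ↦ ?_
  have h := norm_cpow_neg_sub_integral_le (by linarith) hθ₀.le hθ₁
    (Nat.cast_pos (α := ℝ).2 n.succ_pos) (s := s)
  rw [Complex.ofReal_natCast] at h
  refine h.trans ?_
  gcongr
  simp

lemma norm_riemannZeta₀_le {s : ℂ} (hs : 1 ≤ s.re) (hθ₀ : 0 < θ) (hθ₁ : θ ≤ 1) :
    ‖riemannZeta₀ s‖ ≤ 2 * ‖s‖ ^ θ * ∑' n : ℕ, ((n + 1 : ℕ) : ℝ) ^ (-(1 + θ)) := by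
  refine le_on_closure (s := {z : ℂ | 1 < z.re})
    (f := fun z ↦ ‖riemannZeta₀ z‖)
    (g := fun z ↦ 2 * ‖z‖ ^ θ * ∑' n : ℕ, ((n + 1 : ℕ) : ℝ) ^ (-(1 + θ)))
    (fun z hz ↦ norm_riemannZeta₀_le_of_one_lt_re hz hθ₀ hθ₁)
    differentiable_riemannZeta₀.continuous.norm.continuousOn ?_ ?_
  · have : Continuous fun z : ℂ ↦ ‖z‖ ^ θ := continuous_norm.rpow_const fun _ ↦ .inr hθ₀.le
    exact ((continuous_const.mul this).mul continuous_const).continuousOn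
  · rwa [Complex.closure_setOfPred_lt_re]

lemma isBigO_riemannZeta_one_add_mul_I (hθ₀ : 0 < θ) (hθ₁ : θ ≤ 1) :
    (fun t : ℝ ↦ riemannZeta (1 + t * I)) =O[cocompact ℝ] fun t ↦ |t| ^ θ := by
  set K : ℝ := ∑' n : ℕ, ((n + 1 : ℕ) : ℝ) ^ (-(1 + θ))
  have hK : 0 ≤ K := tsum_nonneg fun n ↦ by positivity
  refine .of_bound (1 + 2 * 2 ^ θ * K) ?_
  filter_upwards [tendsto_norm_cocompact_atTop.eventually_ge_atTop 1] with t ht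
  rw [Real.norm_eq_abs] at ht
  have ht₀ : t ≠ 0 := abs_pos.1 (one_pos.trans_le ht)
  have hne : 1 + t * I ≠ 1 := by simpa using ht₀
  have hpole : ‖(1 + t * I - 1)⁻¹‖ ≤ |t| ^ θ := by
    rw [add_sub_cancel_left, norm_inv, norm_mul, Complex.norm_I, mul_one, Complex.norm_real,
      Real.norm_eq_abs]
    exact (inv_le_one_of_one_le₀ ht).trans (Real.one_le_rpow ht hθ₀.le)
  have hnorm : ‖1 + t * I‖ ≤ 2 * |t| :=
    calc ‖1 + t * I‖ ≤ 1 + |t| := by simpa using norm_add_le (1 : ℂ) (t * I)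
      _ ≤ 2 * |t| := by linarith
  calc ‖riemannZeta (1 + t * I)‖
      ≤ ‖(1 + t * I - 1)⁻¹‖ + ‖riemannZeta₀ (1 + t * I)‖ := by
        rw [riemannZeta_eq_inv_sub_add hne]
        exact norm_add_le _ _
    _ ≤ |t| ^ θ + 2 * (2 * |t|) ^ θ * K := by
        refine add_le_add hpole ((norm_riemannZeta₀_le (by simp) hθ₀ hθ₁).trans ?_)
        exact mul_le_mul_of_nonneg_right (by gcongr) hK
    _ = (1 + 2 * 2 ^ θ * K) * ‖|t| ^ θ‖ := by
        rw [Real.mul_rpow two_pos.le (abs_nonneg t), Real.norm_of_nonneg (by positivity)]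
        ring

lemma sq_norm_Gamma_one_add_mul_I {t : ℝ} (ht : t ≠ 0) :
    ‖Complex.Gamma (1 + t * I)‖ ^ 2 = π * t / Real.sinh (π * t) := by
  have htI : (t : ℂ) * I ≠ 0 := mul_ne_zero (Complex.ofReal_ne_zero.2 ht) Complex.I_ne_zero
  have hconj : conj (1 + (t : ℂ) * I) = 1 - t * I := by simp [sub_eq_add_neg]
  apply Complex.ofReal_injective
  calc ((‖Complex.Gamma (1 + t * I)‖ ^ 2 : ℝ) : ℂ)
      = Complex.Gamma (1 + t * I) * Complex.Gamma (1 - t * I) := by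
        rw [← hconj, Complex.Gamma_conj, Complex.mul_conj', Complex.ofReal_pow]
    _ = t * I * (π / Complex.sin (π * (t * I))) := by
        rw [add_comm, Complex.Gamma_add_one _ htI, mul_assoc, Complex.Gamma_mul_Gamma_one_sub]
    _ = ((π * t / Real.sinh (π * t) : ℝ) : ℂ) := by
        rw [← mul_assoc (π : ℂ), Complex.sin_mul_I]
        push_cast
        field_simp

lemma sq_norm_cos_pi_mul_one_add_mul_I_div_two (t : ℝ) :
    ‖Complex.cos (π * (1 + t * I) / 2)‖ ^ 2 = Real.sinh (π * t / 2) ^ 2 := by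
  have harg : π * (1 + t * I) / 2 = ((π * t / 2 : ℝ) : ℂ) * I + π / 2 := by
    push_cast
    ring
  rw [harg, Complex.cos_add_pi_div_two, Complex.sin_mul_I, norm_neg, norm_mul, Complex.norm_I,
    mul_one, ← Complex.ofReal_sinh, Complex.norm_real, Real.norm_eq_abs, sq_abs]

lemma sq_norm_riemannZeta_mul_I {t : ℝ} (ht : t ≠ 0) :
    ‖riemannZeta (t * I)‖ ^ 2 =
      t * Real.tanh (π * t / 2) / (2 * π) * ‖riemannZeta (1 + t * I)‖ ^ 2 := by
  have hconj : ‖riemannZeta (t * I)‖ = ‖riemannZeta (1 - (1 + t * I))‖ := by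
    rw [← Complex.norm_conj (riemannZeta _), ← riemannZeta_conj]
    simp
  have hpole (n : ℕ) : 1 + t * I ≠ -n := fun h ↦ ht (by simpa using congrArg Complex.im h)
  have hpow : ‖(2 * π : ℂ) ^ (-(1 + t * I))‖ = (2 * π)⁻¹ := by
    have h := Complex.norm_cpow_eq_rpow_re_of_pos Real.two_pi_pos (-(1 + t * I))
    simpa [Real.rpow_neg_one] using h
  have hsinh : Real.sinh (π * t / 2) ≠ 0 := by simp [Real.pi_ne_zero, ht]
  have hcosh : Real.cosh (π * t / 2) ≠ 0 := (Real.cosh_pos _).ne'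
  have hdouble : Real.sinh (π * t) = 2 * Real.sinh (π * t / 2) * Real.cosh (π * t / 2) := by
    rw [← Real.sinh_two_mul]
    ring_nf
  rw [hconj, riemannZeta_one_sub hpole (by simpa using ht), norm_mul, norm_mul, norm_mul, norm_mul,
    mul_pow, mul_pow, mul_pow, sq_norm_Gamma_one_add_mul_I ht,
    sq_norm_cos_pi_mul_one_add_mul_I_div_two, hpow, hdouble, Real.tanh_eq_sinh_div_cosh,
    Complex.norm_ofNat]
  field_simp

lemma norm_riemannZeta_mul_I_le {t : ℝ} (ht : t ≠ 0) :
    ‖riemannZeta (t * I)‖ ≤ √(|t| / (2 * π)) * ‖riemannZeta (1 + t * I)‖ := by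
  refine le_of_sq_le_sq ?_ (by positivity)
  rw [mul_pow, Real.sq_sqrt (by positivity), sq_norm_riemannZeta_mul_I ht]
  gcongr
  calc t * Real.tanh (π * t / 2) ≤ |t| * |Real.tanh (π * t / 2)| := by
        rw [← abs_mul]
        exact le_abs_self _
    _ ≤ |t| := mul_le_of_le_one_right (abs_nonneg t) (Real.abs_tanh_lt_one _).le

lemma isBigO_riemannZeta_mul_I (hθ₀ : 0 < θ) (hθ₁ : θ ≤ 1) :
    (fun t : ℝ ↦ riemannZeta (t * I)) =O[cocompact ℝ] fun t ↦ |t| ^ (1 / 2 + θ) := by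
  have hne : ∀ᶠ t : ℝ in cocompact ℝ, t ≠ 0 := isCompact_singleton.compl_mem_cocompact
  have hsqrt : (fun t : ℝ ↦ √(|t| / (2 * π))) =O[cocompact ℝ] fun t ↦ |t| ^ (1 / 2 : ℝ) := by
    simp_rw [Real.sqrt_div' _ Real.two_pi_pos.le, Real.sqrt_eq_rpow, div_eq_inv_mul]
    exact (isBigO_refl _ _).const_mul_left _
  calc (fun t : ℝ ↦ riemannZeta (t * I))
      =O[cocompact ℝ] fun t ↦ √(|t| / (2 * π)) * ‖riemannZeta (1 + t * I)‖ :=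
        .of_norm_eventuallyLE (hne.mono fun t ht ↦ norm_riemannZeta_mul_I_le ht)
    _ =O[cocompact ℝ] fun t ↦ |t| ^ (1 / 2 : ℝ) * |t| ^ θ :=
        hsqrt.mul (isBigO_riemannZeta_one_add_mul_I hθ₀ hθ₁).norm_left
    _ =ᶠ[cocompact ℝ] fun t ↦ |t| ^ (1 / 2 + θ) :=
        hne.mono fun t ht ↦ (Real.rpow_add (abs_pos.2 ht) _ _).symm

end ZetaGrowth

section DelangeCoefficients

lemma two_pi_mul_I_mul_div_log (β : ℝ) (k : ℤ) :
    2 * π * I * k / Real.log β = ((2 * π / Real.log β * k : ℝ) : ℂ) * I := by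
  push_cast
  ring

lemma re_sub_two_pi_mul_I_mul_div_log (β : ℝ) (w : ℂ) (k : ℤ) :
    (w - 2 * π * I * k / Real.log β).re = w.re := by
  rw [two_pi_mul_I_mul_div_log, Complex.sub_re, Complex.re_ofReal_mul, Complex.I_re, mul_zero,
    sub_zero]

lemma exp_two_pi_mul_I_mul_log_div_log (β : ℝ) (k : ℤ) {n : ℕ} (hn : n ≠ 0) :
    Complex.exp (2 * π * I * k * ((Real.log n / Real.log β : ℝ) : ℂ)) =
      (n : ℂ) ^ (2 * π * I * k / Real.log β) := by
  rw [Complex.cpow_def_of_ne_zero (Nat.cast_ne_zero.2 hn), ← Complex.natCast_log,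
    Complex.ofReal_div]
  ring_nf

variable {β θ : ℝ}

lemma isBigO_riemannZeta_two_pi_mul_I_mul_div_log (hβ : Real.log β ≠ 0) (hθ₀ : 0 < θ)
    (hθ₁ : θ ≤ 1) :
    (fun k : ℤ ↦ riemannZeta (2 * π * I * k / Real.log β)) =O[cofinite]
      fun k ↦ |(k : ℝ)| ^ (1 / 2 + θ) := by
  have ha : 2 * π / Real.log β ≠ 0 := div_ne_zero Real.two_pi_pos.ne' hβ
  have h := (isBigO_riemannZeta_mul_I hθ₀ hθ₁).comp_tendsto
    ((tendsto_cocompact_mul_left₀ ha).comp Int.tendsto_coe_cofinite)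
  simp only [Function.comp_def, abs_mul, ← two_pi_mul_I_mul_div_log,
    Real.mul_rpow (abs_nonneg _) (abs_nonneg _)] at h
  exact h.of_const_mul_right

lemma isBigO_inv_one_add_two_pi_mul_I_mul_div_log (hβ : Real.log β ≠ 0) :
    (fun k : ℤ ↦ (1 + 2 * π * I * k / Real.log β)⁻¹) =O[cofinite] fun k ↦ |(k : ℝ)|⁻¹ := by
  set a : ℝ := 2 * π / Real.log β with ha
  have ha₀ : 0 < |a| := abs_pos.2 (div_ne_zero Real.two_pi_pos.ne' hβ)
  refine .of_bound |a|⁻¹ ((eventually_cofinite_ne 0).mono fun k hk ↦ ?_)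
  have him : |a| * |(k : ℝ)| ≤ ‖1 + ((a * k : ℝ) : ℂ) * I‖ := by
    rw [← abs_mul]
    simpa using Complex.abs_im_le_norm (1 + ((a * k : ℝ) : ℂ) * I)
  rw [two_pi_mul_I_mul_div_log, ← ha, norm_inv, norm_inv, Real.norm_eq_abs, abs_abs, ← mul_inv]
  exact inv_anti₀ (mul_pos ha₀ (abs_pos.2 (Int.cast_ne_zero.2 hk))) him

lemma isBigO_delangeCoeff (hβ : Real.log β ≠ 0) (hθ₀ : 0 < θ) (hθ₁ : θ ≤ 1) :
    delangeCoeff β =O[cofinite] fun k ↦ |(k : ℝ)| ^ (-(3 / 2 - θ)) := by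
  have hne : ∀ᶠ k : ℤ in cofinite, k ≠ 0 := eventually_cofinite_ne 0
  have hfactor : (fun k : ℤ ↦ -(((β : ℂ) - 1) / (2 * π * I * k))) =O[cofinite]
      fun k ↦ |(k : ℝ)|⁻¹ := by
    refine .of_bound ‖((β : ℂ) - 1) / (2 * π * I)‖ (.of_forall fun k ↦ le_of_eq ?_)
    rw [← div_div, norm_neg, norm_div, norm_inv, Complex.norm_intCast, Real.norm_eq_abs, abs_abs,
      div_eq_mul_inv]
  calc delangeCoeff β
      =ᶠ[cofinite] fun k ↦ -(((β : ℂ) - 1) / (2 * π * I * k)) *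
        (1 + 2 * π * I * k / Real.log β)⁻¹ * riemannZeta (2 * π * I * k / Real.log β) :=
        hne.mono fun k hk ↦ if_neg hk
    _ =O[cofinite] fun k ↦ |(k : ℝ)|⁻¹ * |(k : ℝ)|⁻¹ * |(k : ℝ)| ^ (1 / 2 + θ) :=
        (hfactor.mul (isBigO_inv_one_add_two_pi_mul_I_mul_div_log hβ)).mul
          (isBigO_riemannZeta_two_pi_mul_I_mul_div_log hβ hθ₀ hθ₁)
    _ =ᶠ[cofinite] fun k ↦ |(k : ℝ)| ^ (-(3 / 2 - θ)) := hne.mono fun k hk ↦ by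
        have hk₀ : 0 < |(k : ℝ)| := abs_pos.2 (Int.cast_ne_zero.2 hk)
        simp only [← Real.rpow_neg_one, ← Real.rpow_add hk₀]
        ring_nf

lemma summable_norm_delangeCoeff (hβ : Real.log β ≠ 0) :
    Summable fun k ↦ ‖delangeCoeff β k‖ :=
  summable_of_isBigO (Real.summable_abs_int_rpow (b := 3 / 2 - 1 / 4) (by norm_num))
    (isBigO_delangeCoeff hβ (by norm_num) (by norm_num)).norm_left

lemma delangeH_log_div_log_mul_cpow_neg (β : ℝ) (w : ℂ) {n : ℕ} (hn : n ≠ 0) :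
    delangeH β (Real.log n / Real.log β) * (n : ℂ) ^ (-w) =
      ∑' k : ℤ, delangeCoeff β k * (n : ℂ) ^ (-(w - 2 * π * I * k / Real.log β)) := by
  rw [delangeH, ← tsum_mul_right]
  refine tsum_congr fun k ↦ ?_
  rw [exp_two_pi_mul_I_mul_log_div_log β k hn, mul_assoc,
    ← Complex.cpow_add _ _ (Nat.cast_ne_zero.2 hn), neg_sub, sub_eq_add_neg]

lemma cumDigitSumInterp_mul_cpow_neg (β : ℝ) (s : ℂ) {n : ℕ} (hn : n ≠ 0) :
    cumDigitSumInterp β n * (n : ℂ) ^ (-s) =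
      ((β : ℂ) - 1) / (2 * Real.log β) * (Real.log n * (n : ℂ) ^ (-(s - 1))) +
        ∑' k : ℤ, delangeCoeff β k * (n : ℂ) ^ (-(s - 1 - 2 * π * I * k / Real.log β)) := by
  rw [← delangeH_log_div_log_mul_cpow_neg β _ hn, neg_sub, sub_eq_add_neg 1 s,
    Complex.cpow_add _ _ (Nat.cast_ne_zero.2 hn), Complex.cpow_one, cumDigitSumInterp]
  ring

end DelangeCoefficients

theorem Gbeta_series_formula_general (β : ℝ) (hβ₀ : 0 < β) (hβ₁ : β ≠ 1) (s : ℂ) (hs : 2 < s.re) :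
    Summable (fun n : ℕ => ‖cumDigitSumInterp β (n + 1) * ((n + 1 : ℕ) : ℂ) ^ (-s)‖) ∧
    Summable (fun k : ℤ =>
      ‖delangeCoeff β k * riemannZeta (s - 1 - 2 * Real.pi * Complex.I * k / Real.log β)‖) ∧
    (∑' n : ℕ, cumDigitSumInterp β (n + 1) * ((n + 1 : ℕ) : ℂ) ^ (-s)) =
      -(((β : ℂ) - 1) / (2 * Real.log β)) * deriv riemannZeta (s - 1) +
        ∑' k : ℤ,
          delangeCoeff β k * riemannZeta (s - 1 - 2 * Real.pi * Complex.I * k / Real.log β) := by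
  have hs₁ : 1 < (s - 1).re := by
    rw [Complex.sub_re, Complex.one_re]
    linarith
  have hcoeff := summable_norm_delangeCoeff (Real.log_ne_zero_of_pos_of_ne_one hβ₀ hβ₁)
  have hre (k : ℤ) := (re_sub_two_pi_mul_I_mul_div_log β (s - 1) k).ge
  have hsum := ((hasSum_log_mul_cpow_neg hs₁).mul_left (((β : ℂ) - 1) / (2 * Real.log β))).add
    (hasSum_tsum_mul_cpow_neg hcoeff hs₁ hre)
  simp only [← cumDigitSumInterp_mul_cpow_neg β s (Nat.succ_ne_zero _), mul_neg, ← neg_mul] at hsum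
  exact ⟨hsum.summable.norm,
    (hasSum_mul_riemannZeta_of_summable_norm hcoeff hs₁ hre).summable.norm, hsum.tsum_eq⟩

theorem Gbeta_series_formula (β : ℝ) (hβ : 1 < β) (s : ℂ) (hs : 2 < s.re) :
    Summable (fun n : ℕ => ‖cumDigitSumInterp β (n + 1) * ((n + 1 : ℕ) : ℂ) ^ (-s)‖) ∧
    Summable (fun k : ℤ =>
      ‖delangeCoeff β k * riemannZeta (s - 1 - 2 * Real.pi * Complex.I * k / Real.log β)‖) ∧
    (∑' n : ℕ, cumDigitSumInterp β (n + 1) * ((n + 1 : ℕ) : ℂ) ^ (-s)) =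
      -(((β : ℂ) - 1) / (2 * Real.log β)) * deriv riemannZeta (s - 1) +
        ∑' k : ℤ,
          delangeCoeff β k * riemannZeta (s - 1 - 2 * Real.pi * Complex.I * k / Real.log β) :=
  Gbeta_series_formula_general β (one_pos.trans hβ) hβ.ne' s hs
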